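/- arXiv:1606.02479 — 5 statements merged into one kernel-verified Lean document; each statement's English description precedes it below -/
import Mathlib

section
/- Let G be a cyclic grid graph with parameters d ≥ 1 and lengths ℓ₁,…,ℓ_d, each ℓᵢ ≥ 5, let f be a perfect graphical translation of G, let v be a vertex and set δ = f(v) − v. Then for every vertex w adjacent to v, one has f(w) = w + δ. -/
/-- The canonical basis vector `eᵢ` in the vertex group of a cyclic grid graph:
`eᵢ[j] = 1` if `j = i` and `0` otherwise. -/
def cycBasis (d : ℕ) (ℓ : Fin d → ℕ) (i : Fin d) : ∀ j, ZMod (ℓ j) :=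
  fun j => if j = i then 1 else 0

/-- Adjacency in the cyclic grid graph with parameters `d` and `ℓ`:
`v` and `w` are neighbors iff `v - w = ±eᵢ` for some `i`. -/
def CycAdj (d : ℕ) (ℓ : Fin d → ℕ) (v w : ∀ j, ZMod (ℓ j)) : Prop :=
  ∃ i, v - w = cycBasis d ℓ i ∨ w - v = cycBasis d ℓ i

/-- A perfect graphical translation of the cyclic grid graph: a bijection of the vertex
set that maps every vertex to a neighbor and preserves (non-)adjacency both ways. -/
structure IsPerfectTranslation (d : ℕ) (ℓ : Fin d → ℕ)
    (f : (∀ j, ZMod (ℓ j)) → (∀ j, ZMod (ℓ j))) : Prop where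
  bij : Function.Bijective f
  adj_map : ∀ v, CycAdj d ℓ v (f v)
  pres : ∀ v w, CycAdj d ℓ v w ↔ CycAdj d ℓ (f v) (f w)

/-- `x` is plus or minus a canonical basis vector, with an explicit integer lift. -/
def CycUnit (d : ℕ) (ℓ : Fin d → ℕ) (x : ∀ j, ZMod (ℓ j)) : Prop :=
  ∃ (i : Fin d) (a : ℤ), (a = 1 ∨ a = -1) ∧
    x = fun j => (((if j = i then a else 0 : ℤ)) : ZMod (ℓ j))

theorem cycAdj_iff_unit (d : ℕ) (ℓ : Fin d → ℕ) (v w : ∀ j, ZMod (ℓ j)) :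
    CycAdj d ℓ v w ↔ CycUnit d ℓ (w - v) := by
  constructor
  · rintro ⟨i, h | h⟩
    · refine ⟨i, -1, Or.inr rfl, ?_⟩
      rw [← neg_sub, h]
      funext j
      by_cases hj : j = i <;> simp [cycBasis, hj]
    · refine ⟨i, 1, Or.inl rfl, ?_⟩
      rw [h]
      funext j
      by_cases hj : j = i <;> simp [cycBasis, hj]
  · rintro ⟨i, a, rfl | rfl, h⟩
    · refine ⟨i, Or.inr ?_⟩
      rw [h]
      funext j
      by_cases hj : j = i <;> simp [cycBasis, hj]
    · refine ⟨i, Or.inl ?_⟩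
      rw [← neg_sub, h]
      funext j
      by_cases hj : j = i <;> simp [cycBasis, hj]

theorem cycUnit_four (d : ℕ) (ℓ : Fin d → ℕ) (hℓ : ∀ i, 5 ≤ ℓ i)
    (t u s r : ∀ j, ZMod (ℓ j)) (ht : CycUnit d ℓ t) (hu : CycUnit d ℓ u)
    (hs : CycUnit d ℓ s) (hr : CycUnit d ℓ r) (h : t + u = s + r) :
    t = s ∨ u = s ∨ u = -t := by
  obtain ⟨i, a, ha, rfl⟩ := ht
  obtain ⟨j, b, hb, rfl⟩ := hu
  obtain ⟨k, c, hc, rfl⟩ := hs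
  obtain ⟨l, g, hg, rfl⟩ := hr
  have key : ∀ m : Fin d, (if m = i then a else 0) + (if m = j then b else 0)
      = (if m = k then c else 0) + (if m = l then g else 0) := by
    intro m
    have hm := congrFun h m
    simp only [Pi.add_apply] at hm
    rw [← Int.cast_add, ← Int.cast_add, ZMod.intCast_eq_intCast_iff_dvd_sub] at hm
    have h5 : (5 : ℤ) ≤ ℓ m := by exact_mod_cast hℓ m
    have hz := Int.eq_zero_of_abs_lt_dvd hm (by
      rw [abs_lt]
      constructor <;> split_ifs <;> omega)
    omega
  have main : (i = k ∧ a = c) ∨ (j = k ∧ b = c) ∨ (i = j ∧ b = -a) := by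
    have h1 := key i
    have h2 := key j
    have h3 := key k
    grind
  rcases main with ⟨rfl, rfl⟩ | ⟨rfl, rfl⟩ | ⟨rfl, rfl⟩
  · exact Or.inl rfl
  · exact Or.inr (Or.inl rfl)
  · refine Or.inr (Or.inr ?_)
    funext m
    by_cases hm : m = i <;> simp [hm]

theorem cycUnit_neg (d : ℕ) (ℓ : Fin d → ℕ) (x : ∀ j, ZMod (ℓ j)) (h : CycUnit d ℓ x) :
    CycUnit d ℓ (-x) := by
  obtain ⟨i, a, ha, rfl⟩ := h
  refine ⟨i, -a, by omega, ?_⟩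
  funext m
  by_cases hm : m = i <;> simp [hm]

theorem cycUnit_ne_neg (d : ℕ) (ℓ : Fin d → ℕ) (hℓ : ∀ i, 5 ≤ ℓ i)
    (x : ∀ j, ZMod (ℓ j)) (h : CycUnit d ℓ x) : -x ≠ x := by
  obtain ⟨i, a, ha, rfl⟩ := h
  intro h
  have hm := congrFun h i
  simp only [Pi.neg_apply, if_true] at hm
  rw [← Int.cast_neg, ZMod.intCast_eq_intCast_iff_dvd_sub] at hm
  have h5 : (5 : ℤ) ≤ ℓ i := by exact_mod_cast hℓ i
  have hz := Int.eq_zero_of_abs_lt_dvd hm (by rw [abs_lt]; omega)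
  omega

theorem cyc_step (d : ℕ) (ℓ : Fin d → ℕ) (hℓ : ∀ i, 5 ≤ ℓ i)
    (f : (∀ j, ZMod (ℓ j)) → (∀ j, ZMod (ℓ j)))
    (hf : IsPerfectTranslation d ℓ f) (v w : ∀ j, ZMod (ℓ j)) (hw : CycAdj d ℓ v w) :
    w - v = f v - v ∨ f w - w = f v - v ∨ f w - w = -(w - v) :=
  cycUnit_four d ℓ hℓ (w - v) (f w - w) (f v - v) (f w - f v)
    ((cycAdj_iff_unit ..).1 hw) ((cycAdj_iff_unit ..).1 (hf.adj_map w))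
    ((cycAdj_iff_unit ..).1 (hf.adj_map v)) ((cycAdj_iff_unit ..).1 ((hf.pres v w).1 hw))
    (by abel)

theorem cyc_back (d : ℕ) (ℓ : Fin d → ℕ) (hℓ : ∀ i, 5 ≤ ℓ i)
    (f : (∀ j, ZMod (ℓ j)) → (∀ j, ZMod (ℓ j)))
    (hf : IsPerfectTranslation d ℓ f) (v s : ∀ j, ZMod (ℓ j)) (hs : f v = v + s) :
    f (v - s) = v := by
  have hsu : CycUnit d ℓ s := by
    have := (cycAdj_iff_unit ..).1 (hf.adj_map v)
    rwa [hs, add_sub_cancel_left] at this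
  have e : v - s - v = -s := by abel
  have hadj : CycAdj d ℓ v (v - s) := by
    rw [cycAdj_iff_unit, e]
    exact cycUnit_neg _ _ _ hsu
  have := cyc_step d ℓ hℓ f hf v (v - s) hadj
  rw [hs, add_sub_cancel_left, e, neg_neg] at this
  rcases this with h | h | h
  · exact absurd h (cycUnit_ne_neg d ℓ hℓ s hsu)
  · rw [sub_eq_iff_eq_add] at h; rw [h]; abel
  · rw [sub_eq_iff_eq_add] at h; rw [h]; abel

theorem contamination_lemma (d : ℕ) (hd : 1 ≤ d) (ℓ : Fin d → ℕ) (hℓ : ∀ i, 5 ≤ ℓ i)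
    (f : (∀ j, ZMod (ℓ j)) → (∀ j, ZMod (ℓ j)))
    (hf : IsPerfectTranslation d ℓ f)
    (v w : ∀ j, ZMod (ℓ j)) (hw : CycAdj d ℓ v w) :
    f w = w + (f v - v) := by
  obtain ⟨s, hs⟩ : ∃ s, s = f v - v := ⟨_, rfl⟩
  have hv : f v = v + s := by rw [hs]; abel
  have hstep := cyc_step d ℓ hℓ f hf v w hw
  rw [← hs] at hstep ⊢
  rcases hstep with h | h | h
  · have iter : ∀ n : ℕ, f (v - n • s) = v - n • s + s := by
      intro n
      induction n with
      | zero => simpa using hv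
      | succ n ih =>
        have := cyc_back d ℓ hℓ f hf _ s ih
        have e : v - (n + 1) • s = v - n • s - s := by rw [succ_nsmul]; abel
        rw [e, this]; abel
    obtain ⟨N, hN, hNs⟩ : ∃ N : ℕ, 0 < N ∧ N • s = 0 := by
      refine ⟨∏ i, ℓ i, Finset.prod_pos fun i _ => by have := hℓ i; omega, ?_⟩
      funext j
      have hdvd : ℓ j ∣ ∏ i, ℓ i := Finset.dvd_prod_of_mem _ (Finset.mem_univ j)
      have := (ZMod.natCast_eq_zero_iff (∏ i, ℓ i) (ℓ j)).2 hdvd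
      rw [Pi.smul_apply, nsmul_eq_mul, this, zero_mul, Pi.zero_apply]
    obtain ⟨M, rfl⟩ : ∃ M, N = M + 1 := ⟨N - 1, by omega⟩
    have hM : M • s = -s := by
      rw [succ_nsmul] at hNs
      exact eq_neg_of_add_eq_zero_left hNs
    have := iter M
    have hwv : w = v + s := by rw [← h]; abel
    rw [hM, sub_neg_eq_add] at this
    rw [hwv, this]
  · rw [sub_eq_iff_eq_add] at h; rw [h]; abel
  · have h1 : f w = v := by rw [sub_eq_iff_eq_add] at h; rw [h]; abel
    have h2 := cyc_back d ℓ hℓ f hf v s hv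
    have h3 : w = v - s := hf.bij.1 (h1.trans h2.symm)
    rw [h1, h3]; abel
end

section
/- Let G be a cyclic grid graph with parameters d ≥ 1 and lengths ℓ₁,…,ℓ_d, each ℓᵢ ≥ 5, let f be a perfect graphical translation of G, let v be a vertex and set δ = f(v) − v. Then f(v − δ) = v. -/
theorem zmod_small_ne (n : ℕ) (hn : 5 ≤ n) (k : ℕ) (h0 : 0 < k) (hk : k < 5) :
    (k : ZMod n) ≠ 0 := by
  rw [Ne, ZMod.natCast_eq_zero_iff]
  intro h
  have := Nat.le_of_dvd h0 h
  omega

theorem cycAdj_step {d : ℕ} {ℓ : Fin d → ℕ} {v w : ∀ j, ZMod (ℓ j)} (h : CycAdj d ℓ v w) :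
    ∃ i, w - v = cycBasis d ℓ i ∨ w - v = -cycBasis d ℓ i := by
  obtain ⟨i, h | h⟩ := h
  · exact ⟨i, Or.inr (by rw [← h]; abel)⟩
  · exact ⟨i, Or.inl h⟩

theorem ring_aux_one {R : Type*} [CommRing R] {x : R} (h2 : (2 : R) ≠ 0)
    (h3 : (3 : R) ≠ 0) (h4 : (4 : R) ≠ 0) (hx : x = 0 ∨ x = 1 ∨ x = -1)
    (hi : -1 + x = 1 + 1) : False := by
  rcases hx with rfl | rfl | rfl
  · exact h3 (by linear_combination -hi)
  · exact h2 (by linear_combination -hi)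
  · exact h4 (by linear_combination -hi)

theorem ring_aux_two {R : Type*} [CommRing R] {x : R} (h2 : (2 : R) ≠ 0)
    (h3 : (3 : R) ≠ 0) (h4 : (4 : R) ≠ 0) (hx : x = 0 ∨ x = 1 ∨ x = -1)
    (hi : 1 + x = -1 + -1) : False := by
  rcases hx with rfl | rfl | rfl
  · exact h3 (by linear_combination hi)
  · exact h4 (by linear_combination hi)
  · exact h2 (by linear_combination hi)

theorem step_eq {d : ℕ} {ℓ : Fin d → ℕ} (hℓ : ∀ i, 5 ≤ ℓ i) (a s t : ∀ j, ZMod (ℓ j))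
    (ha : ∃ i, a = cycBasis d ℓ i ∨ a = -cycBasis d ℓ i)
    (hs : ∃ i, s = cycBasis d ℓ i ∨ s = -cycBasis d ℓ i)
    (ht : ∃ i, t = cycBasis d ℓ i ∨ t = -cycBasis d ℓ i)
    (h : t + s = a + a) : t = a := by
  obtain ⟨i, ha⟩ := ha
  obtain ⟨j, hs⟩ := hs
  obtain ⟨k, ht⟩ := ht
  have hi := congrFun h i
  have h1 : (1 : ZMod (ℓ i)) ≠ 0 := by
    exact_mod_cast zmod_small_ne (ℓ i) (hℓ i) 1 (by norm_num) (by norm_num)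
  have h2 : (2 : ZMod (ℓ i)) ≠ 0 := by
    exact_mod_cast zmod_small_ne (ℓ i) (hℓ i) 2 (by norm_num) (by norm_num)
  have h3 : (3 : ZMod (ℓ i)) ≠ 0 := by
    exact_mod_cast zmod_small_ne (ℓ i) (hℓ i) 3 (by norm_num) (by norm_num)
  have h4 : (4 : ZMod (ℓ i)) ≠ 0 := by
    exact_mod_cast zmod_small_ne (ℓ i) (hℓ i) 4 (by norm_num) (by norm_num)
  have hsi : s i = 0 ∨ s i = 1 ∨ s i = -1 := by
    by_cases hj : i = j <;> rcases hs with rfl | rfl <;> simp [cycBasis, hj]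
  by_cases hk : i = k
  · subst hk
    rcases ha with rfl | rfl <;> rcases ht with rfl | rfl
    · rfl
    · exfalso
      have hb : cycBasis d ℓ i i = 1 := by simp [cycBasis]
      simp only [Pi.add_apply, Pi.neg_apply] at hi
      rw [hb] at hi
      exact ring_aux_one h2 h3 h4 hsi hi
    · exfalso
      have hb : cycBasis d ℓ i i = 1 := by simp [cycBasis]
      simp only [Pi.add_apply, Pi.neg_apply] at hi
      rw [hb] at hi
      exact ring_aux_two h2 h3 h4 hsi hi
    · rfl
  · exfalso
    have hti : t i = 0 := by
      rcases ht with rfl | rfl <;> simp [cycBasis, hk]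
    rw [Pi.add_apply, Pi.add_apply, hti] at hi
    have hai : a i = 1 ∨ a i = -1 := by
      rcases ha with rfl | rfl <;> simp [cycBasis]
    rcases hai with e' | e' <;> rcases hsi with e | e | e <;> rw [e, e'] at hi <;> grind

theorem perfect_translation_inverse_step (d : ℕ) (hd : 1 ≤ d) (ℓ : Fin d → ℕ)
    (hℓ : ∀ i, 5 ≤ ℓ i)
    (f : (∀ j, ZMod (ℓ j)) → (∀ j, ZMod (ℓ j)))
    (hf : IsPerfectTranslation d ℓ f)
    (v : ∀ j, ZMod (ℓ j)) :
    f (v - (f v - v)) = v := by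
  have hA := hf.adj_map v
  have hu : CycAdj d ℓ (v - (f v - v)) v := by
    obtain ⟨i, h | h⟩ := hA
    · exact ⟨i, Or.inl (by rw [← h]; abel)⟩
    · exact ⟨i, Or.inr (by rw [← h]; abel)⟩
  have hC := (hf.pres _ _).1 hu
  have hB := hf.adj_map (v - (f v - v))
  have key := step_eq hℓ _ _ _ (cycAdj_step hA) (cycAdj_step hC) (cycAdj_step hB) (by abel)
  have := sub_eq_iff_eq_add.1 key
  rw [this]; abel
end

section
/- Let G be a cyclic grid graph with parameters d ≥ 1 and lengths ℓ₁,…,ℓ_d, each ℓᵢ ≥ 5, and let f be a perfect graphical translation of G. Then f is a geometrical translation: there exists δ = ±eᵢ for some i ∈ {1,…,d} such that f(v) = v + δ for every vertex v. -/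
/-- A unit step `±eᵢ`. -/
def IsU (d : ℕ) (ℓ : Fin d → ℕ) (x : ∀ j, ZMod (ℓ j)) : Prop :=
  ∃ i, x = cycBasis d ℓ i ∨ x = -cycBasis d ℓ i

theorem cycAdj_iff (d : ℕ) (ℓ : Fin d → ℕ) (v w : ∀ j, ZMod (ℓ j)) :
    CycAdj d ℓ v w ↔ IsU d ℓ (w - v) := by
  unfold CycAdj IsU
  refine exists_congr fun i => ?_
  rw [or_comm, ← neg_sub w v, neg_eq_iff_eq_neg]

theorem IsU.neg {d : ℕ} {ℓ : Fin d → ℕ} {x : ∀ j, ZMod (ℓ j)} (h : IsU d ℓ x) :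
    IsU d ℓ (-x) := by
  obtain ⟨i, h | h⟩ := h
  · exact ⟨i, Or.inr (by rw [h])⟩
  · exact ⟨i, Or.inl (by rw [h, neg_neg])⟩

theorem natCast_ne {n k : ℕ} (hn : 5 ≤ n) (hk : 0 < k) (hk' : k < 5) : (k : ZMod n) ≠ 0 := by
  intro h
  rw [ZMod.natCast_eq_zero_iff] at h
  exact absurd (Nat.le_of_dvd hk h) (by omega)

/-- Every unit step has a coordinate witnessing it. -/
theorem IsU.coord {d : ℕ} {ℓ : Fin d → ℕ} {s : ∀ j, ZMod (ℓ j)} (h : IsU d ℓ s) :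
    ∃ i, (s i = 1 ∨ s i = -1) ∧ ∀ x, IsU d ℓ x → x = s ∨ x = -s ∨ x i = 0 := by
  obtain ⟨i, h⟩ := h
  refine ⟨i, ?_, ?_⟩
  · rcases h with h | h <;> simp [h, cycBasis]
  · rintro x ⟨j, hx⟩
    by_cases hij : i = j
    · subst hij
      rcases h with h | h <;> rcases hx with hx | hx <;> simp [h, hx]
    · right; right
      rcases hx with hx | hx <;> simp [hx, cycBasis, hij]

theorem unit_sum {d : ℕ} {ℓ : Fin d → ℕ} (hℓ : ∀ i, 5 ≤ ℓ i) {s b a t : ∀ j, ZMod (ℓ j)}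
    (hs : IsU d ℓ s) (hb : IsU d ℓ b) (ha : IsU d ℓ a) (ht : IsU d ℓ t)
    (h : s + b = a + t) : a = s ∨ t = s ∨ b = -s := by
  obtain ⟨i, hi, H⟩ := hs.coord
  have h1 := natCast_ne (hℓ i) (k := 1) (by norm_num) (by norm_num)
  have h2 := natCast_ne (hℓ i) (k := 2) (by norm_num) (by norm_num)
  have h3 := natCast_ne (hℓ i) (k := 3) (by norm_num) (by norm_num)
  have h4 := natCast_ne (hℓ i) (k := 4) (by norm_num) (by norm_num)
  push_cast at h1 h2 h3 h4
  have hc := congrFun h i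
  simp only [Pi.add_apply] at hc
  by_contra! hcon
  obtain ⟨n1, n2, n3⟩ := hcon
  have Ha : a i = -s i ∨ a i = 0 := by
    rcases H a ha with h | h | h
    · exact absurd h n1
    · left; rw [h]; rfl
    · exact Or.inr h
  have Ht : t i = -s i ∨ t i = 0 := by
    rcases H t ht with h | h | h
    · exact absurd h n2
    · left; rw [h]; rfl
    · exact Or.inr h
  have Hb : b i = s i ∨ b i = 0 := by
    rcases H b hb with h | h | h
    · left; rw [h]
    · exact absurd h n3
    · exact Or.inr h
  clear H h n1 n2 n3
  generalize s i = s at *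
  generalize a i = a at *
  generalize b i = b at *
  generalize t i = t at *
  rcases Ha with rfl | rfl <;> rcases Ht with rfl | rfl <;> rcases Hb with rfl | rfl <;>
    rcases hi with rfl | rfl <;> first
      | exact h1 (by linear_combination hc)
      | exact h1 (by linear_combination -hc)
      | exact h2 (by linear_combination hc)
      | exact h2 (by linear_combination -hc)
      | exact h3 (by linear_combination hc)
      | exact h3 (by linear_combination -hc)
      | exact h4 (by linear_combination hc)
      | exact h4 (by linear_combination -hc)

theorem two_ne {d : ℕ} {ℓ : Fin d → ℕ} (hℓ : ∀ i, 5 ≤ ℓ i) {s : ∀ j, ZMod (ℓ j)}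
    (hs : IsU d ℓ s) : s ≠ -s := by
  obtain ⟨i, hi, -⟩ := hs.coord
  have h2 := natCast_ne (hℓ i) (k := 2) (by norm_num) (by norm_num)
  push_cast at h2
  intro h
  have hc := congrFun h i
  simp only [Pi.neg_apply] at hc
  generalize s i = s at *
  rcases hi with rfl | rfl <;> first
      | exact h2 (by linear_combination hc)
      | exact h2 (by linear_combination -hc)

theorem IsU.order {d : ℕ} {ℓ : Fin d → ℕ} {s : ∀ j, ZMod (ℓ j)}
    (hs : IsU d ℓ s) : ∃ i, ℓ i • s = 0 := by
  obtain ⟨i, h⟩ := hs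
  refine ⟨i, ?_⟩
  have : ℓ i • cycBasis d ℓ i = 0 := by
    ext j
    by_cases hj : j = i
    · subst hj; simp [cycBasis]
    · simp [cycBasis, hj]
  rcases h with rfl | rfl <;> simp [this]

theorem perfect_is_geometrical (d : ℕ) (hd : 1 ≤ d) (ℓ : Fin d → ℕ)
    (hℓ : ∀ i, 5 ≤ ℓ i)
    (f : (∀ j, ZMod (ℓ j)) → (∀ j, ZMod (ℓ j)))
    (hf : IsPerfectTranslation d ℓ f) :
    ∃ (i : Fin d) (δ : ∀ j, ZMod (ℓ j)),
      (δ = cycBasis d ℓ i ∨ δ = -cycBasis d ℓ i) ∧ ∀ v, f v = v + δ := by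
  obtain ⟨g, hg⟩ : ∃ g : (∀ j, ZMod (ℓ j)) → (∀ j, ZMod (ℓ j)), ∀ v, f v = v + g v :=
    ⟨fun v => f v - v, fun v => (add_sub_cancel v (f v)).symm⟩
  have gU : ∀ v, IsU d ℓ (g v) := fun v => by
    have := (cycAdj_iff d ℓ _ _).1 (hf.adj_map v)
    rwa [hg, add_sub_cancel_left] at this
  have key : ∀ v s, IsU d ℓ s → IsU d ℓ (s + g (v + s) - g v) := fun v s hs => by
    have := (cycAdj_iff d ℓ _ _).1 ((hf.pres v (v + s)).1
      ((cycAdj_iff d ℓ _ _).2 (by simpa using hs)))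
    rw [hg, hg] at this
    convert this using 1
    abel
  -- going backwards along the direction of motion
  have back : ∀ v, g (v - g v) = g v := fun v => by
    have hU := gU v
    have h := key (v - g v) (g v) hU
    rw [sub_add_cancel] at h
    rcases unit_sum hℓ hU hU (gU (v - g v)) h (by abel) with h' | h' | h'
    · exact h'
    · have h2 := sub_eq_iff_eq_add.1 h'
      exact (add_left_cancel h2).symm
    · exact absurd h' (two_ne hℓ hU)
  have backn : ∀ v (n : ℕ), g (v - n • g v) = g v := fun v n => by
    induction n with
    | zero => simp
    | succ n ih =>
      have := back (v - n • g v)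
      rw [ih] at this
      rw [← this, succ_nsmul]
      congr 1
      rw [this]
      abel
  have forw : ∀ v, g (v + g v) = g v := fun v => by
    obtain ⟨i, hi⟩ := (gU v).order
    have h5 := hℓ i
    obtain ⟨n, hn⟩ : ∃ n, ℓ i = n + 1 := ⟨ℓ i - 1, by omega⟩
    have := backn v n
    rw [hn, succ_nsmul] at hi
    have h2 : n • g v = - g v := eq_neg_of_add_eq_zero_left hi
    rwa [h2, sub_neg_eq_add] at this
  have step : ∀ v s, IsU d ℓ s → g (v + s) = g v := fun v s hs => by
    rcases unit_sum hℓ hs (gU (v + s)) (gU v) (key v s hs) (by abel) with h | h | h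
    · have := forw v
      rwa [h] at this ⊢
    · rw [add_sub_assoc, add_eq_left, sub_eq_zero] at h
      exact h
    · have := forw (v + s)
      rw [h] at this
      rw [h, ← this]
      congr 1
      abel
  let P : AddSubmonoid (∀ j, ZMod (ℓ j)) :=
    { carrier := {p | ∀ v, g (v + p) = g v}
      zero_mem' := fun v => by simp
      add_mem' := fun {a b} ha hb v => by rw [← add_assoc, hb, ha] }
  have hP : ∀ v, v ∈ P := fun v => by
    have hv : v = ∑ i, (v i).val • cycBasis d ℓ i := by
      ext j
      have : NeZero (ℓ j) := ⟨by have := hℓ j; omega⟩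
      simp [cycBasis, Finset.sum_apply]
    rw [hv]
    exact P.sum_mem fun i _ => P.nsmul_mem (fun v => step v _ ⟨i, Or.inl rfl⟩) _
  obtain ⟨i, hi⟩ := gU 0
  refine ⟨i, g 0, hi, fun v => ?_⟩
  have := hP v 0
  rw [zero_add] at this
  rw [hg, this]
end

section
/- Let G be a noncyclic grid graph with parameters d ≥ 1 and lengths ℓ₁,…,ℓ_d satisfying ℓᵢ ≥ 2·(ℓ_{i+1}·…·ℓ_d) + 2 for all i ∈ {1,…,d−1} and ℓ_d ≥ 3. Let f be a candidate graphical translation of G maximizing |V₀,f| among all candidate graphical translations of G. Then |V₀,f| ≥ (ℓ₁ − 1)·ℓ₂·…·ℓ_d. -/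
/-- Membership in the vertex set of the noncyclic grid graph with parameters `d` and `ℓ`:
`V = [0, ℓ₁ - 1] × ⋯ × [0, ℓ_d - 1] ⊆ ℤ^d`. -/
def InGrid (d : ℕ) (ℓ : Fin d → ℕ) (v : Fin d → ℤ) : Prop :=
  ∀ i, 0 ≤ v i ∧ v i < ℓ i

/-- Adjacency in the noncyclic grid graph: taxicab distance equal to `1`. -/
def TaxiAdj {d : ℕ} (v w : Fin d → ℤ) : Prop :=
  (∑ i, |v i - w i|) = 1

/-- The `i`-th canonical basis vector of `ℤ^d`. -/
def gridBasis (d : ℕ) (i : Fin d) : Fin d → ℤ :=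
  fun j => if j = i then 1 else 0

/-- A candidate graphical translation of the noncyclic grid graph with parameters `d`
and `ℓ`: a map `f : V → V ∪ {ω}` (modeled with `Option`, `none` being the black hole
`ω`) that is injective on `V₀,f = f⁻¹(V)`, maps every vertex of `V₀,f` to a neighbor,
and preserves (non-)adjacency both ways on `V₀,f`. -/
structure IsCandidateGridTranslation (d : ℕ) (ℓ : Fin d → ℕ)
    (f : {v : Fin d → ℤ // InGrid d ℓ v} → Option {v : Fin d → ℤ // InGrid d ℓ v}) :
    Prop where
  inj : ∀ v w x, f v = some x → f w = some x → v = w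
  adj_map : ∀ v w, f v = some w → TaxiAdj v.1 w.1
  pres : ∀ v₁ v₂ w₁ w₂, f v₁ = some w₁ → f v₂ = some w₂ →
    (TaxiAdj v₁.1 v₂.1 ↔ TaxiAdj w₁.1 w₂.1)

open Classical in
/-- The translation by the first basis vector, defined wherever it stays in the grid. -/
noncomputable def gridShift (d : ℕ) (hd : 0 < d) (ℓ : Fin d → ℕ)
    (v : {v : Fin d → ℤ // InGrid d ℓ v}) : Option {v : Fin d → ℤ // InGrid d ℓ v} :=
  if h : InGrid d ℓ (v.1 + gridBasis d ⟨0, hd⟩) then some ⟨_, h⟩ else none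

theorem gridShift_eq_some {d : ℕ} {hd : 0 < d} {ℓ : Fin d → ℕ}
    {v w : {v : Fin d → ℤ // InGrid d ℓ v}} (h : gridShift d hd ℓ v = some w) :
    w.1 = v.1 + gridBasis d ⟨0, hd⟩ := by
  unfold gridShift at h
  split_ifs at h with h1
  simp only [Option.some.injEq] at h
  rw [← h]

theorem gridShift_candidate (d : ℕ) (hd : 0 < d) (ℓ : Fin d → ℕ) :
    IsCandidateGridTranslation d ℓ (gridShift d hd ℓ) where
  inj v w x hv hw := by
    have h1 := gridShift_eq_some hv
    have h2 := gridShift_eq_some hw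
    exact Subtype.ext (add_right_cancel (h1.symm.trans h2))
  adj_map v w h := by
    have h1 := gridShift_eq_some h
    unfold TaxiAdj
    simp [h1, gridBasis, apply_ite abs]
  pres v₁ v₂ w₁ w₂ h1 h2 := by
    unfold TaxiAdj
    rw [gridShift_eq_some h1, gridShift_eq_some h2]
    simp

theorem grid_finite (d : ℕ) (ℓ : Fin d → ℕ) : Finite {v : Fin d → ℤ // InGrid d ℓ v} := by
  refine Set.Finite.subset (Set.finite_Icc (0 : Fin d → ℤ) (fun i => (ℓ i : ℤ))) ?_
  intro v hv
  exact ⟨fun i => (hv i).1, fun i => (hv i).2.le⟩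

theorem gridShift_ncard (d : ℕ) (hd : 0 < d) (ℓ : Fin d → ℕ) :
    (ℓ ⟨0, hd⟩ - 1) * ∏ k ∈ Finset.univ.filter (fun k : Fin d => 0 < (k : ℕ)), ℓ k ≤
      Set.ncard {v | gridShift d hd ℓ v ≠ none} := by
  have := grid_finite d ℓ
  let m : Fin d → ℕ := fun i => if (i : ℕ) = 0 then ℓ i - 1 else ℓ i
  have hm0 : m ⟨0, hd⟩ = ℓ ⟨0, hd⟩ - 1 := by simp [m]
  have hm : ∀ i, m i ≤ ℓ i := by intro i; simp only [m]; split_ifs <;> omega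
  have hcard : Nat.card (∀ i, Fin (m i)) =
      (ℓ ⟨0, hd⟩ - 1) * ∏ k ∈ Finset.univ.filter (fun k : Fin d => 0 < (k : ℕ)), ℓ k := by
    rw [Nat.card_eq_fintype_card, Fintype.card_pi]
    simp only [Fintype.card_fin]
    rw [← Finset.mul_prod_erase Finset.univ m (Finset.mem_univ ⟨0, hd⟩), hm0]
    congr 1
    refine Finset.prod_congr ?_ ?_
    · ext k
      simp [Fin.ext_iff, Nat.pos_iff_ne_zero]
    · intro k hk
      have hk' : (k : ℕ) ≠ 0 := by
        have := (Finset.mem_filter.mp hk).2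
        omega
      simp [m, hk']
  rw [← hcard, ← Nat.card_coe_set_eq]
  have hin : ∀ x : (∀ i, Fin (m i)), InGrid d ℓ (fun i => ((x i : ℕ) : ℤ)) := by
    intro x i
    have h1 := (x i).2
    have h2 := hm i
    show (0 : ℤ) ≤ ((x i : ℕ) : ℤ) ∧ ((x i : ℕ) : ℤ) < ℓ i
    constructor <;> omega
  have hdom : ∀ x : (∀ i, Fin (m i)),
      gridShift d hd ℓ ⟨fun i => ((x i : ℕ) : ℤ), hin x⟩ ≠ none := by
    intro x
    have h : InGrid d ℓ ((fun i => ((x i : ℕ) : ℤ)) + gridBasis d ⟨0, hd⟩) := by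
      intro i
      have h1 := (x i).2
      have h2 := hm i
      simp only [Pi.add_apply, gridBasis]
      by_cases hi : i = ⟨0, hd⟩
      · have h3 : m i = ℓ i - 1 := by rw [hi, hm0]
        rw [if_pos hi]
        constructor <;> omega
      · rw [if_neg hi]
        constructor <;> omega
    simp [gridShift, h]
  refine Nat.card_le_card_of_injective
    (fun x => (⟨⟨fun i => ((x i : ℕ) : ℤ), hin x⟩, hdom x⟩ :
      ({v | gridShift d hd ℓ v ≠ none} : Set {v : Fin d → ℤ // InGrid d ℓ v}))) ?_
  intro x y hxy
  have h := congrArg (fun z => z.1.1) hxy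
  funext i
  have hi : ((x i : ℕ) : ℤ) = ((y i : ℕ) : ℤ) := congrFun h i
  apply Fin.ext
  exact_mod_cast hi

theorem maximal_candidate_lower_bound
    (d : ℕ) (hd : 0 < d) (ℓ : Fin d → ℕ)
    (hℓ : ∀ i : Fin d, (i : ℕ) + 1 < d →
      2 * (∏ k ∈ Finset.univ.filter (fun k : Fin d => i < k), ℓ k) + 2 ≤ ℓ i)
    (hlast : 3 ≤ ℓ ⟨d - 1, by omega⟩)
    (f : {v : Fin d → ℤ // InGrid d ℓ v} → Option {v : Fin d → ℤ // InGrid d ℓ v})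
    (hf : IsCandidateGridTranslation d ℓ f)
    (hmax : ∀ g, IsCandidateGridTranslation d ℓ g →
      Set.ncard {v | g v ≠ none} ≤ Set.ncard {v | f v ≠ none})
    :
    (ℓ ⟨0, hd⟩ - 1) * ∏ k ∈ Finset.univ.filter (fun k : Fin d => 0 < (k : ℕ)), ℓ k ≤
      Set.ncard {v | f v ≠ none} := by
  exact (gridShift_ncard d hd ℓ).trans (hmax _ (gridShift_candidate d hd ℓ))
end

section
/- On the 2-dimensional noncyclic grid graph with ℓ₁ = ℓ₂ = 3 (the 3×3 grid), there exists a candidate graphical translation f with |V₀,f| = 7 that is not a geometrical translation; in particular, |V₀,f| strictly exceeds the value (ℓ₁ − 1)·ℓ₂ = 6 attained by any geometrical translation, so on this graph not every generalized graphical translation is a geometrical translation or f_ω. -/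
/-- A generalized graphical translation: a candidate graphical translation `f` such that
for every `v ∈ V₀,f` and every candidate graphical translation `g` with `g v = f v`,
one has `|V₀,g| ≤ |V₀,f|`. -/
def IsGeneralizedGridTranslation (d : ℕ) (ℓ : Fin d → ℕ)
    (f : {v : Fin d → ℤ // InGrid d ℓ v} → Option {v : Fin d → ℤ // InGrid d ℓ v}) :
    Prop :=
  IsCandidateGridTranslation d ℓ f ∧
    ∀ v, f v ≠ none → ∀ g, IsCandidateGridTranslation d ℓ g → g v = f v →
      Set.ncard {u | g u ≠ none} ≤ Set.ncard {u | f u ≠ none}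

/-- A geometrical translation on the grid: translation by `δ = ±eᵢ`, sending
out-of-range vertices to `ω`. -/
def IsGeometricalGridTranslation (d : ℕ) (ℓ : Fin d → ℕ)
    (f : {v : Fin d → ℤ // InGrid d ℓ v} → Option {v : Fin d → ℤ // InGrid d ℓ v}) :
    Prop :=
  ∃ (i : Fin d) (δ : Fin d → ℤ),
    (δ = gridBasis d i ∨ δ = -gridBasis d i) ∧
    ∀ v w, f v = some w ↔ (w : Fin d → ℤ) = v.1 + δ

/-- The vertices of the 3×3 grid. -/
abbrev Grid33 := {v : Fin 2 → ℤ // InGrid 2 ![3, 3] v}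

/-- Coordinates on the 3×3 grid. -/
def gridEquiv : Fin 3 × Fin 3 ≃ Grid33 where
  toFun p := ⟨![(p.1.val : ℤ), (p.2.val : ℤ)], by
    intro i
    have h1 := p.1.isLt
    have h2 := p.2.isLt
    fin_cases i <;> simp⟩
  invFun v := (⟨(v.1 0).toNat, by have := v.2 0; simp at this; omega⟩,
    ⟨(v.1 1).toNat, by have := v.2 1; simp at this; omega⟩)
  left_inv p := by
    ext <;> simp
  right_inv v := by
    have h0 := v.2 0
    have h1 := v.2 1
    apply Subtype.ext
    funext i
    fin_cases i
    · simpa using h0.1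
    · simpa using h1.1

/-- Seven of the eight arcs of the rotation of the boundary cycle. -/
def rot : Fin 3 × Fin 3 → Option (Fin 3 × Fin 3)
  | (0, 0) => some (0, 1)
  | (0, 1) => some (0, 2)
  | (0, 2) => some (1, 2)
  | (1, 2) => some (2, 2)
  | (2, 2) => some (2, 1)
  | (2, 1) => some (2, 0)
  | (2, 0) => some (1, 0)
  | _ => none

/-- The rotation on the grid itself. -/
def rotGrid (v : Grid33) : Option Grid33 := (rot (gridEquiv.symm v)).map gridEquiv

lemma rotGrid_eq (p q : Fin 3 × Fin 3) :
    rotGrid (gridEquiv p) = some (gridEquiv q) ↔ rot p = some q := by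
  simp [rotGrid]

lemma taxi_iff (p q : Fin 3 × Fin 3) :
    TaxiAdj (gridEquiv p).1 (gridEquiv q).1 ↔
      |(p.1.val : ℤ) - q.1.val| + |(p.2.val : ℤ) - q.2.val| = 1 := by
  simp [TaxiAdj, gridEquiv, Fin.sum_univ_two]

lemma ncard_grid (P : Grid33 → Prop) (Q : Fin 3 × Fin 3 → Prop) [DecidablePred Q]
    (h : ∀ p, P (gridEquiv p) ↔ Q p) :
    Set.ncard {v | P v} = (Finset.univ.filter Q).card := by
  have : {v | P v} = gridEquiv '' (Finset.univ.filter Q : Finset _) := by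
    ext v
    obtain ⟨p, rfl⟩ := gridEquiv.surjective v
    simp [h]
  rw [this, Set.ncard_image_of_injective _ gridEquiv.injective, Set.ncard_coe_finset]

lemma rotGrid_card : Set.ncard {v | rotGrid v ≠ none} = 7 := by
  rw [ncard_grid _ (fun p => (rot p).isSome = true)]
  · decide
  · intro p
    simp [rotGrid, Option.isSome_iff_ne_none]

lemma rotGrid_cand : IsCandidateGridTranslation 2 ![3, 3] rotGrid where
  inj := by
    have key : ∀ p q : Fin 3 × Fin 3, rot p = rot q → rot p = none ∨ p = q := by decide
    simp only [gridEquiv.surjective.forall, rotGrid_eq]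
    intro p q r hp hq
    rcases key p q (hp.trans hq.symm) with h | h
    · simp [h] at hp
    · rw [h]
  adj_map := by
    simp only [gridEquiv.surjective.forall, rotGrid_eq, taxi_iff]
    decide
  pres := by
    have key : ∀ p q : Fin 3 × Fin 3, ∀ r ∈ rot p, ∀ s ∈ rot q,
      (|(p.1.val : ℤ) - q.1.val| + |(p.2.val : ℤ) - q.2.val| = 1 ↔
       |(r.1.val : ℤ) - s.1.val| + |(r.2.val : ℤ) - s.2.val| = 1) := by decide
    simp only [gridEquiv.surjective.forall, rotGrid_eq, taxi_iff]
    intro p q r s hp hq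
    exact key p q r hp s hq

lemma geom_card (g : Grid33 → Option Grid33)
    (hg : IsGeometricalGridTranslation 2 ![3, 3] g) :
    Set.ncard {v | g v ≠ none} = 6 := by
  obtain ⟨i, δ, hδ, h⟩ := hg
  have hd : ∀ v, g v ≠ none ↔ InGrid 2 ![3, 3] (v.1 + δ) := by
    intro v
    rw [Option.ne_none_iff_exists']
    constructor
    · rintro ⟨w, hw⟩
      rw [← (h v w).1 hw]
      exact w.2
    · intro hv
      exact ⟨⟨_, hv⟩, (h v ⟨_, hv⟩).2 rfl⟩
  rw [ncard_grid _ (fun p => (0 ≤ (p.1.val : ℤ) + δ 0 ∧ (p.1.val : ℤ) + δ 0 < 3) ∧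
      (0 ≤ (p.2.val : ℤ) + δ 1 ∧ (p.2.val : ℤ) + δ 1 < 3))]
  · fin_cases i <;> rcases hδ with rfl | rfl <;> decide
  · intro p
    rw [hd]
    simp only [InGrid, Fin.forall_fin_two]
    exact Iff.rfl

theorem three_by_three_counterexample :
    (∃ f : {v : Fin 2 → ℤ // InGrid 2 ![3, 3] v} →
        Option {v : Fin 2 → ℤ // InGrid 2 ![3, 3] v},
      IsCandidateGridTranslation 2 ![3, 3] f ∧
      Set.ncard {v | f v ≠ none} = 7 ∧
      ¬ IsGeometricalGridTranslation 2 ![3, 3] f) ∧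
    (∀ g : {v : Fin 2 → ℤ // InGrid 2 ![3, 3] v} →
        Option {v : Fin 2 → ℤ // InGrid 2 ![3, 3] v},
      IsGeometricalGridTranslation 2 ![3, 3] g →
        Set.ncard {v | g v ≠ none} = (3 - 1) * 3) ∧
    (∃ f : {v : Fin 2 → ℤ // InGrid 2 ![3, 3] v} →
        Option {v : Fin 2 → ℤ // InGrid 2 ![3, 3] v},
      IsGeneralizedGridTranslation 2 ![3, 3] f ∧
      ¬ IsGeometricalGridTranslation 2 ![3, 3] f ∧
      ¬ ∀ v, f v = none) := by
  refine ⟨⟨rotGrid, rotGrid_cand, rotGrid_card, fun h => ?_⟩, fun g hg => geom_card g hg, ?_⟩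
  · have := geom_card _ h
    rw [rotGrid_card] at this
    omega
  · have : Finite Grid33 := Finite.of_equiv _ gridEquiv
    obtain ⟨f, hf, hmax⟩ := Set.exists_max_image
      {f : Grid33 → Option Grid33 | IsCandidateGridTranslation 2 ![3, 3] f}
      (fun f => Set.ncard {v | f v ≠ none}) (Set.toFinite _) ⟨rotGrid, rotGrid_cand⟩
    have h7 : 7 ≤ Set.ncard {v | f v ≠ none} := rotGrid_card ▸ hmax rotGrid rotGrid_cand
    refine ⟨f, ⟨hf, fun v _ g hg _ => hmax g hg⟩, fun h => ?_, fun h => ?_⟩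
    · have := geom_card _ h
      omega
    · simp [h] at h7
end
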